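/- arXiv:1008.4548 — 2 statements merged into one kernel-verified Lean document; each statement's English description precedes it below -/
import Mathlib

section
/- Every infinite traceable graph either contains arbitrarily long finite chordless paths or contains a subgraph isomorphic to the graph A. -/
/-- `G` contains a chordless path on `n` vertices: `n` distinct vertices
`v 0, …, v (n-1)` where `v i` and `v j` are adjacent iff `|i - j| = 1`. -/
def HasChordlessPath {V : Type*} (G : SimpleGraph V) (n : ℕ) : Prop :=
  ∃ v : Fin n → V, Function.Injective v ∧
    ∀ i j : Fin n, G.Adj (v i) (v j) ↔ ((i : ℕ) + 1 = (j : ℕ) ∨ (j : ℕ) + 1 = (i : ℕ))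

/-- The graph `A`: vertices `a_n = Sum.inl n` and `b_m = Sum.inr m`, with an edge
between `a_n` and `b_m` exactly when `n ≤ m`. -/
def graphA : SimpleGraph (ℕ ⊕ ℕ) where
  Adj x y := (∃ n m : ℕ, n ≤ m ∧ x = Sum.inl n ∧ y = Sum.inr m) ∨
             (∃ n m : ℕ, n ≤ m ∧ x = Sum.inr m ∧ y = Sum.inl n)
  symm := by
    constructor
    rintro x y (⟨n, m, h, rfl, rfl⟩ | ⟨n, m, h, rfl, rfl⟩)
    · exact Or.inr ⟨n, m, h, rfl, rfl⟩
    · exact Or.inl ⟨n, m, h, rfl, rfl⟩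
  loopless := by
    constructor
    rintro x (⟨n, m, h, rfl, h2⟩ | ⟨n, m, h, rfl, h2⟩) <;> simp at h2

/-- `G` contains a subgraph isomorphic to `H`. -/
def ContainsCopy {V W : Type*} (G : SimpleGraph V) (H : SimpleGraph W) : Prop :=
  ∃ g : W → V, Function.Injective g ∧ ∀ x y : W, H.Adj x y → G.Adj (g x) (g y)

open Filter

namespace GRS

/-- Steps of a graph that stay inside `X`. -/
def Step (H : SimpleGraph ℕ) (X : Set ℕ) (x y : ℕ) : Prop := H.Adj x y ∧ x ∈ X ∧ y ∈ X

/-- A walk of length `n` inside `X` from `a` to `b`. -/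
def IsW (H : SimpleGraph ℕ) (X : Set ℕ) (a b n : ℕ) (v : ℕ → ℕ) : Prop :=
  v 0 = a ∧ v n = b ∧ (∀ t ≤ n, v t ∈ X) ∧ ∀ t < n, H.Adj (v t) (v (t + 1))

lemma exists_walk (H : SimpleGraph ℕ) (X : Set ℕ) (a b : ℕ) (ha : a ∈ X)
    (h : Relation.ReflTransGen (Step H X) a b) : ∃ n v, IsW H X a b n v := by
  induction h with
  | refl => exact ⟨0, fun _ => a, rfl, rfl, fun _ _ => ha, fun t ht => by omega⟩
  | @tail b c _ hs ih =>
    obtain ⟨n, v, h0, hn, hX, hA⟩ := ih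
    refine ⟨n + 1, fun t => if t ≤ n then v t else c, by simp [h0], by simp, ?_, ?_⟩
    · intro t ht
      by_cases h : t ≤ n
      · simpa [h] using hX t h
      · simpa [h] using hs.2.2
    · intro t ht
      by_cases h : t + 1 ≤ n
      · have h' : t ≤ n := by omega
        simpa [h, h'] using hA t (by omega)
      · have : t = n := by omega
        subst this
        simpa [hn] using hs.1

lemma exists_min_walk (H : SimpleGraph ℕ) (X : Set ℕ) (a b : ℕ) (ha : a ∈ X)
    (h : Relation.ReflTransGen (Step H X) a b) :
    ∃ n v, IsW H X a b n v ∧ (∀ i j, i < j → j ≤ n → v i ≠ v j) ∧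
      (∀ i j, i + 1 < j → j ≤ n → ¬ H.Adj (v i) (v j)) := by
  classical
  have hex : ∃ n, ∃ v, IsW H X a b n v := exists_walk H X a b ha h
  obtain ⟨v, hv⟩ := Nat.find_spec hex
  have hmin : ∀ m, (∃ v, IsW H X a b m v) → Nat.find hex ≤ m := fun m hm => Nat.find_min' hex hm
  generalize Nat.find hex = n at hv hmin
  obtain ⟨h0, hn, hX, hA⟩ := hv
  refine ⟨n, v, ⟨h0, hn, hX, hA⟩, ?_, ?_⟩
  · intro i j hij hj he
    have := hmin (n - (j - i)) ⟨fun t => if t ≤ i then v t else v (t + (j - i)), by simp [h0], ?_, ?_, ?_⟩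
    · omega
    · by_cases h : n - (j - i) ≤ i
      · have h1 : n = j := by omega
        have h2 : n - (j - i) = i := by omega
        simp only [h2, le_refl, if_true]
        rw [he, ← h1, hn]
      · simp only [h, if_false]
        rw [show n - (j - i) + (j - i) = n by omega, hn]
    · intro t ht
      by_cases h : t ≤ i
      · simpa [h] using hX t (by omega)
      · simpa [h] using hX (t + (j - i)) (by omega)
    · intro t ht
      by_cases h : t + 1 ≤ i
      · have h' : t ≤ i := by omega
        simpa [h, h'] using hA t (by omega)
      · by_cases h' : t ≤ i
        · have : t = i := by omega
          subst this
          have h3 := hA j (by omega)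
          simp only [le_refl, if_true, h, if_false]
          rw [he, show t + 1 + (j - t) = j + 1 by omega]
          exact h3
        · have h3 := hA (t + (j - i)) (by omega)
          simp only [h, h', if_false]
          rwa [show t + 1 + (j - i) = t + (j - i) + 1 by omega]
  · intro i j hij hj he
    have := hmin (n - (j - i - 1))
      ⟨fun t => if t ≤ i then v t else v (t + (j - i - 1)), by simp [h0], ?_, ?_, ?_⟩
    · omega
    · have h : ¬ n - (j - i - 1) ≤ i := by omega
      simp only [h, if_false]
      rw [show n - (j - i - 1) + (j - i - 1) = n by omega, hn]
    · intro t ht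
      by_cases h : t ≤ i
      · simpa [h] using hX t (by omega)
      · simpa [h] using hX (t + (j - i - 1)) (by omega)
    · intro t ht
      by_cases h : t + 1 ≤ i
      · have h' : t ≤ i := by omega
        simpa [h, h'] using hA t (by omega)
      · by_cases h' : t ≤ i
        · have : t = i := by omega
          subst this
          simp only [le_refl, if_true, h, if_false]
          rw [show t + 1 + (j - t - 1) = j by omega]
          exact he
        · have h3 := hA (t + (j - i - 1)) (by omega)
          simp only [h, h', if_false]
          rwa [show t + 1 + (j - i - 1) = t + (j - i - 1) + 1 by omega]

lemma chordless_of_walk (H : SimpleGraph ℕ) (X : Set ℕ) (a b n : ℕ) (v : ℕ → ℕ)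
    (hw : IsW H X a b n v) (h1 : ∀ i j, i < j → j ≤ n → v i ≠ v j)
    (h2 : ∀ i j, i + 1 < j → j ≤ n → ¬ H.Adj (v i) (v j)) (N : ℕ) (hN : N ≤ n + 1) :
    HasChordlessPath H N := by
  refine ⟨fun i => v i, ?_, ?_⟩
  · intro i j hij
    by_contra hne
    have hne' : (i : ℕ) ≠ j := fun h => hne (Fin.ext h)
    rcases lt_or_gt_of_ne hne' with h | h
    · exact h1 i j h (by omega) hij
    · exact h1 j i h (by omega) hij.symm
  · intro i j
    constructor
    · intro hadj
      by_contra hcon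
      push Not at hcon
      have hne : (i : ℕ) ≠ j := by
        intro h
        simp only [h] at hadj
        exact H.loopless.irrefl _ hadj
      rcases lt_or_gt_of_ne hne with h | h
      · exact h2 i j (by omega) (by omega) hadj
      · exact h2 j i (by omega) (by omega) hadj.symm
    · rintro (h | h)
      · have := hw.2.2.2 i (by omega)
        rwa [h] at this
      · have := hw.2.2.2 j (by omega)
        rw [h] at this
        exact this.symm

/-- Vertex set of a block. -/
def Blk (N : ℕ) (v : ℕ → ℕ) : Set ℕ := {x | ∃ s < N, v s = x}

lemma exists_block (H : SimpleGraph ℕ) (hH : ∀ i, H.Adj i (i + 1)) (N : ℕ)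
    (hN : ¬ HasChordlessPath H N) (i j : ℕ) (hij : i ≤ j) :
    ∃ v : ℕ → ℕ, (∀ s, i ≤ v s ∧ v s ≤ j) ∧ i ∈ Blk N v ∧ j ∈ Blk N v ∧
      Relation.ReflTransGen (Step H (Blk N v)) i j := by
  have hreach : ∀ d, i + d ≤ j → Relation.ReflTransGen (Step H (Set.Icc i j)) i (i + d) := by
    intro d
    induction d with
    | zero => intro _; exact .refl
    | succ d ih =>
      intro h
      exact (ih (by omega)).tail ⟨hH _, ⟨by omega, by omega⟩, ⟨by omega, by omega⟩⟩
  have hr := hreach (j - i) (by omega)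
  rw [show i + (j - i) = j by omega] at hr
  obtain ⟨n, v, hw, h1, h2⟩ := exists_min_walk H (Set.Icc i j) i j ⟨le_refl _, hij⟩ hr
  have hnN : n < N := by
    by_contra hcon
    exact hN (chordless_of_walk H _ i j n v hw h1 h2 N (by omega))
  obtain ⟨h0, hn, hX, hA⟩ := hw
  have hmem : ∀ t ≤ n, v t ∈ Blk N (fun s => v (min s n)) :=
    fun t ht => ⟨t, by omega, by simp [ht]⟩
  refine ⟨fun s => v (min s n), fun s => hX _ (by omega), ?_, ?_, ?_⟩
  · simpa [h0] using hmem 0 (by omega)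
  · simpa [hn] using hmem n le_rfl
  · have : ∀ t ≤ n, Relation.ReflTransGen (Step H (Blk N (fun s => v (min s n)))) i (v t) := by
      intro t
      induction t with
      | zero => intro _; rw [h0]
      | succ t ih =>
        intro ht
        exact (ih (by omega)).tail ⟨hA t (by omega), hmem t (by omega), hmem _ ht⟩
    have h := this n le_rfl
    rwa [hn] at h

lemma copy_of_infinite (H : SimpleGraph ℕ) (S : Set ℕ) (hS : S.Infinite)
    (hc : ∀ F : Finset ℕ, (∀ x ∈ F, x ∈ S) → ∀ b, ∃ y, b < y ∧ ∀ x ∈ F, H.Adj x y) :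
    ContainsCopy H graphA := by
  classical
  obtain ⟨f, hP, hr⟩ := exists_seq_of_forall_finset_exists
    (fun p : ℕ × ℕ => p.1 ∈ S ∧ p.1 < p.2 ∧ H.Adj p.1 p.2)
    (fun p q : ℕ × ℕ => p.2 < q.1 ∧ H.Adj p.1 q.2) (by
      intro s hs
      obtain ⟨a, haS, ha⟩ := hS.exists_gt (s.sup Prod.snd)
      obtain ⟨b, hab, hb⟩ := hc (insert a (s.image Prod.fst)) (by
        intro x hx
        rcases Finset.mem_insert.1 hx with rfl | hx
        · exact haS
        · obtain ⟨p, hp, rfl⟩ := Finset.mem_image.1 hx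
          exact (hs p hp).1) a
      refine ⟨(a, b), ⟨haS, hab, hb a (Finset.mem_insert_self _ _)⟩, fun x hx => ⟨?_, ?_⟩⟩
      · exact lt_of_le_of_lt (Finset.le_sup (f := Prod.snd) hx) ha
      · exact hb _ (Finset.mem_insert_of_mem (Finset.mem_image_of_mem _ hx)))
  have key : ∀ n m, n ≤ m → H.Adj (f n).1 (f m).2 := by
    intro n m h
    rcases h.eq_or_lt with rfl | h
    · exact (hP n).2.2
    · exact (hr n m h).2
  have hlt : ∀ n, (f n).1 < (f n).2 := fun n => (hP n).2.1
  have hlt2 : ∀ n m, n < m → (f n).2 < (f m).1 := fun n m h => (hr n m h).1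
  refine ⟨Sum.elim (fun n => (f n).1) (fun n => (f n).2), ?_, ?_⟩
  · rintro (n | n) (m | m) h <;> simp only [Sum.elim_inl, Sum.elim_inr] at h <;>
      rcases lt_trichotomy n m with h' | h' | h'
    all_goals first
      | (subst h'; rfl)
      | (exfalso
         have e1 := hlt n
         have e2 := hlt m
         first
           | (have e3 := hlt2 _ _ h'; omega)
           | (subst h'; omega))
  · rintro x y (⟨n, m, h, rfl, rfl⟩ | ⟨n, m, h, rfl, rfl⟩)
    · exact key n m h
    · exact (key n m h).symm

lemma exists_chain (U : Filter ℕ) [U.NeBot] (hU : ∀ b, ∀ᶠ l in U, b < l)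
    (Q : ℕ → ℕ → ℕ → ℕ → Prop) (B : ℕ)
    (hQ : ∀ i j, B < i → i < j → ∀ᶠ k in U, ∀ᶠ l in U, Q i j k l) (m : ℕ) :
    ∃ f : ℕ → ℕ, B < f 0 ∧ (∀ t < m, f t < f (t + 1)) ∧
      (∀ t s, t + 2 ≤ s → s + 1 ≤ m → Q (f t) (f (t + 1)) (f s) (f (s + 1))) ∧
      (∀ t, t + 1 < m → ∀ᶠ l in U, Q (f t) (f (t + 1)) (f m) l) := by
  induction m with
  | zero => exact ⟨fun _ => B + 1, by simp, by simp, fun t s _ h => by omega, fun t h => by omega⟩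
  | succ m ih =>
    obtain ⟨f, hB, hmono, h1, h2⟩ := ih
    have hBt : ∀ t ≤ m, B < f t := by
      intro t
      induction t with
      | zero => intro _; exact hB
      | succ t iht => intro ht; exact (iht (by omega)).trans (hmono t (by omega))
    have e1 : ∀ᶠ l in U, ∀ t ∈ Finset.range (m - 1), Q (f t) (f (t + 1)) (f m) l :=
      (eventually_all_finset _).2 fun t ht => h2 t (by have := Finset.mem_range.1 ht; omega)
    have e2 : ∀ᶠ l in U, ∀ t ∈ Finset.range m, ∀ᶠ l' in U, Q (f t) (f (t + 1)) l l' :=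
      (eventually_all_finset _).2 fun t ht => by
        have := Finset.mem_range.1 ht
        exact hQ _ _ (hBt t (by omega)) (hmono t this)
    obtain ⟨l, hl1, hl2, hl3⟩ := (e1.and (e2.and (hU (f m)))).exists
    have hg : ∀ t ≤ m, Function.update f (m + 1) l t = f t := fun t ht =>
      Function.update_of_ne (by omega) _ _
    have hg' : Function.update f (m + 1) l (m + 1) = l := Function.update_self _ _ _
    refine ⟨Function.update f (m + 1) l, ?_, ?_, ?_, ?_⟩
    · rwa [hg 0 (by omega)]
    · intro t ht
      rw [hg t (by omega)]
      by_cases h : t = m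
      · subst h; rwa [hg']
      · rw [hg _ (by omega)]; exact hmono t (by omega)
    · intro t s hts hs
      rw [hg t (by omega), hg (t + 1) (by omega), hg s (by omega)]
      by_cases h : s = m
      · subst h
        rw [hg']
        exact hl1 t (Finset.mem_range.2 (by omega))
      · rw [hg (s + 1) (by omega)]
        exact h1 t s hts (by omega)
    · intro t ht
      rw [hg t (by omega), hg (t + 1) (by omega), hg']
      exact hl2 t (Finset.mem_range.2 (by omega))

theorem main (H : SimpleGraph ℕ) (hH : ∀ i, H.Adj i (i + 1)) (N : ℕ)
    (hN : ¬ HasChordlessPath H N) : ContainsCopy H graphA := by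
  classical
  have hblk := exists_block H hH N hN
  choose! p hp hpi hpj hpr using hblk
  let U : Ultrafilter ℕ := hyperfilter ℕ
  have hU : ∀ b, ∀ᶠ l in (U : Filter ℕ), b < l := fun b => by
    have h : (U : Filter ℕ) ≤ atTop := by
      rw [← Nat.cofinite_eq_atTop]; exact hyperfilter_le_cofinite
    exact h (eventually_gt_atTop b)
  let S : ℕ → Set ℕ := fun s =>
    {v | ∀ᶠ k in (U : Filter ℕ), ∀ᶠ l in (U : Filter ℕ), H.Adj v (p k l s)}
  by_cases hS : ∃ s, (S s).Infinite
  · obtain ⟨s, hs⟩ := hS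
    refine copy_of_infinite H (S s) hs fun F hF b => ?_
    have e : ∀ᶠ k in (U : Filter ℕ), ∀ x ∈ F, ∀ᶠ l in (U : Filter ℕ), H.Adj x (p k l s) :=
      (eventually_all_finset _).2 hF
    obtain ⟨k, hk, hbk⟩ := (e.and (hU b)).exists
    obtain ⟨l, hl, hkl⟩ := (((eventually_all_finset _).2 hk).and (hU k)).exists
    exact ⟨p k l s, hbk.trans_le (hp k l hkl.le s).1, hl⟩
  · exfalso
    push Not at hS
    have hfin : (⋃ s ∈ Finset.range N, S s).Finite :=
      Set.Finite.biUnion (Finset.finite_toSet _) fun s _ => by simpa using hS s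
    obtain ⟨B, hB⟩ := hfin.bddAbove
    have hgood : ∀ v, B < v → ∀ s ∈ Finset.range N,
        ∀ᶠ k in (U : Filter ℕ), ∀ᶠ l in (U : Filter ℕ), ¬ H.Adj v (p k l s) := by
      intro v hv s hs
      have hnot : v ∉ S s := fun h => absurd (hB (Set.mem_biUnion hs h)) (by omega)
      have h1 := Ultrafilter.eventually_not.2 hnot
      exact h1.mono fun k hk => Ultrafilter.eventually_not.2 hk
    obtain ⟨f, hfB, hmono, hQ, -⟩ := exists_chain (U : Filter ℕ) hU
      (fun i j k l => ∀ r ∈ Finset.range N, ∀ s ∈ Finset.range N, ¬ H.Adj (p i j r) (p k l s)) B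
      (by
        intro i j hi hij
        have e : ∀ᶠ k in (U : Filter ℕ), ∀ r ∈ Finset.range N, ∀ s ∈ Finset.range N,
            ∀ᶠ l in (U : Filter ℕ), ¬ H.Adj (p i j r) (p k l s) :=
          (eventually_all_finset _).2 fun r _ => (eventually_all_finset _).2 fun s hs =>
            hgood _ (hi.trans_le (hp i j hij.le r).1) s hs
        exact e.mono fun k hk => (eventually_all_finset _).2 fun r hr =>
          (eventually_all_finset _).2 fun s hs => hk r hr s hs) (N + 1)
    let X : Set ℕ := {x | ∃ t < N + 1, x ∈ Blk N (p (f t) (f (t + 1)))}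
    have hreach : ∀ m ≤ N + 1, Relation.ReflTransGen (Step H X) (f 0) (f m) := by
      intro m
      induction m with
      | zero => intro _; exact .refl
      | succ m ih =>
        intro hm
        refine (ih (by omega)).trans ?_
        refine Relation.ReflTransGen.mono ?_ _ _ (hpr (f m) (f (m + 1)) (hmono m (by omega)).le)
        rintro x y ⟨h, hx, hy⟩
        exact ⟨h, ⟨m, by omega, hx⟩, ⟨m, by omega, hy⟩⟩
    have h0X : f 0 ∈ X := ⟨0, by omega, hpi _ _ (hmono 0 (by omega)).le⟩
    obtain ⟨n, v, hw, h1, h2⟩ := exists_min_walk H X _ _ h0X (hreach (N + 1) le_rfl)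
    have hf1 : ∀ t, t + 1 ≤ N + 1 → f 0 < f (t + 1) := by
      intro t
      induction t with
      | zero => intro _; exact hmono 0 (by omega)
      | succ t ih => intro h; exact (ih (by omega)).trans (hmono _ (by omega))
    have hlev : ∀ k ≤ n, ∀ t < N + 1, v k ∈ Blk N (p (f t) (f (t + 1))) → t ≤ k := by
      intro k
      induction k with
      | zero =>
        intro _ t ht hv
        rw [hw.1] at hv
        obtain ⟨s, hs, he⟩ := hv
        have h3 := (hp _ _ (hmono t ht).le s).1
        rw [he] at h3
        by_contra hcon
        obtain ⟨t', rfl⟩ : ∃ t', t = t' + 1 := ⟨t - 1, by omega⟩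
        have := hf1 t' (by omega)
        omega
      | succ k ih =>
        intro hk t ht hv
        obtain ⟨t', ht', hv'⟩ := hw.2.2.1 k (by omega)
        have h3 := ih (by omega) t' ht' hv'
        by_contra hcon
        obtain ⟨r, hr, her⟩ := hv'
        obtain ⟨s, hs, hes⟩ := hv
        have h4 := hw.2.2.2 k (by omega)
        rw [← her, ← hes] at h4
        exact hQ t' t (by omega) (by omega) r (Finset.mem_range.2 hr) s (Finset.mem_range.2 hs) h4
    have h5 : N ≤ n := hlev n le_rfl N (by omega) (by
      rw [hw.2.1]; exact hpj _ _ (hmono N (by omega)).le)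
    exact hN (chordless_of_walk H X _ _ n v hw h1 h2 N (by omega))

end GRS

/-- Every infinite traceable graph either contains arbitrarily long finite chordless
paths or contains a subgraph isomorphic to the graph `A`. -/
theorem traceable_chordless_or_copy_of_A {V : Type*} (G : SimpleGraph V)
    (T : ℕ ≃ V) (hT : ∀ i : ℕ, G.Adj (T i) (T (i + 1))) :
    (∀ n : ℕ, HasChordlessPath G n) ∨ ContainsCopy G graphA := by
  by_cases h : ∀ n : ℕ, HasChordlessPath G n
  · exact Or.inl h
  · right
    push Not at h
    obtain ⟨N, hN⟩ := h
    have hN' : ¬ HasChordlessPath (G.comap T) N := by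
      rintro ⟨v, hv, hadj⟩
      exact hN ⟨fun i => T (v i), T.injective.comp hv, hadj⟩
    obtain ⟨g, hg, hadj⟩ := GRS.main (G.comap T) hT N hN'
    exact ⟨fun x => T (g x), T.injective.comp hg, hadj⟩
end

section
/- For every injective function f : ℕ → ℕ there exists a graph G with vertex set ℕ such that: (i) n and n+1 are adjacent in G for every n ∈ ℕ (so G is traceable via the identity); (ii) G contains no chordless 4-path; and (iii) for every injective map g from the vertices of the graph A into ℕ such that adjacent vertices of A are mapped to adjacent vertices of G, and for every k ∈ ℕ, k is in the range of f if and only if there exists x ≤ max{g(a_i) : i ≤ k} with f(x) = k. -/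
theorem aux_unbounded (f : ℕ → ℕ) (hf : Function.Injective f) (n : ℕ) :
    ∃ t, n ≤ t ∧ ∀ m, t < m → f t < f m := by
  have hne : ∃ y, ∃ t, n ≤ t ∧ f t = y := ⟨f n, n, le_rfl, rfl⟩
  classical
  obtain ⟨t, ht, hy⟩ := Nat.find_spec hne
  refine ⟨t, ht, fun m hm => ?_⟩
  have h1 := Nat.find_min' hne ⟨m, by omega, rfl⟩
  have h2 : f t ≠ f m := fun h => by have := hf h; omega
  omega

/-- `b n` is the end of the block of `n`. -/
def blockGraph (b : ℕ → ℕ) : SimpleGraph ℕ where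
  Adj n m := n ≠ m ∧ (b n = b m ∨ (b n = n ∧ n < m) ∨ (b m = m ∧ m < n))
  symm := by
    constructor
    rintro x y ⟨h, h'⟩
    exact ⟨h.symm, by tauto⟩
  loopless := by
    constructor
    rintro x ⟨h, _⟩
    exact h rfl

theorem aux_noP4 (b : ℕ → ℕ) (h1 : ∀ n, n ≤ b n) (h2 : ∀ n m, n ≤ b m → b n ≤ b m) :
    ¬ HasChordlessPath (blockGraph b) 4 := by
  rintro ⟨v, hv, h⟩
  have e01 := (h 0 1).2 (by simp)
  have e12 := (h 1 2).2 (by simp)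
  have e23 := (h 2 3).2 (by simp)
  have e02 := (h 0 2).not.2 (by simp)
  have e03 := (h 0 3).not.2 (by simp)
  have e13 := (h 1 3).not.2 (by simp)
  have n02 : v 0 ≠ v 2 := fun h => by simpa using hv h
  have n03 : v 0 ≠ v 3 := fun h => by simpa using hv h
  have n13 : v 1 ≠ v 3 := fun h => by simpa using hv h
  simp only [blockGraph] at e01 e12 e23 e02 e03 e13
  generalize v 0 = p at *
  generalize v 1 = q at *
  generalize v 2 = r at *
  generalize v 3 = s at *
  clear h hv
  have := h1 p
  have := h1 q
  have := h1 r
  have := h1 s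
  have := h2 p q
  have := h2 q p
  have := h2 p r
  have := h2 r p
  have := h2 p s
  have := h2 s p
  have := h2 q r
  have := h2 r q
  have := h2 q s
  have := h2 s q
  have := h2 s r
  have := h2 r s
  clear h1 h2
  generalize b p = bp at *
  generalize b q = bq at *
  generalize b r = br at *
  generalize b s = bs at *
  omega

/-- For every injective `f : ℕ → ℕ` there is a graph `G` on `ℕ`, traceable via the
identity and with no chordless 4-path, such that from any embedding `g` of the graph
`A` into `G` one can decide membership in the range of `f`: `k` is in the range of
`f` iff `f x = k` for some `x ≤ max {g(a_i) : i ≤ k}`. -/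
theorem exists_graph_coding_range_via_A (f : ℕ → ℕ) (hf : Function.Injective f) :
    ∃ G : SimpleGraph ℕ,
      (∀ n : ℕ, G.Adj n (n + 1)) ∧
      ¬ HasChordlessPath G 4 ∧
      ∀ g : ℕ ⊕ ℕ → ℕ, Function.Injective g →
        (∀ x y : ℕ ⊕ ℕ, graphA.Adj x y → G.Adj (g x) (g y)) →
        ∀ k : ℕ, (∃ x : ℕ, f x = k) ↔
          ∃ x ≤ (Finset.range (k + 1)).sup (fun i => g (Sum.inl i)), f x = k := by
  classical
  have hT := aux_unbounded f hf
  set b : ℕ → ℕ := fun n => Nat.find (hT n) with hb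
  have b1 : ∀ n, n ≤ b n := fun n => (Nat.find_spec (hT n)).1
  have b2 : ∀ n m, b n < m → f (b n) < f m := fun n => (Nat.find_spec (hT n)).2
  have b3 : ∀ n t, n ≤ t → (∀ m, t < m → f t < f m) → b n ≤ t :=
    fun n t h h' => Nat.find_min' (hT n) ⟨h, h'⟩
  clear_value b
  have b4 : ∀ n m, n ≤ b m → b n ≤ b m := fun n m h => b3 n _ h (b2 m)
  refine ⟨blockGraph b, fun n => ⟨by omega, ?_⟩, aux_noP4 b b1 b4, ?_⟩
  · have := b1 n
    have := b1 (n + 1)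
    have := b4 n (n + 1)
    have := b4 (n + 1) n
    omega
  intro g hg hA k
  constructor
  swap
  · rintro ⟨x, _, h⟩
    exact ⟨x, h⟩
  rintro ⟨x, rfl⟩
  refine ⟨x, ?_, rfl⟩
  by_contra hx
  push Not at hx
  -- images of the `a i` are block ends
  have hend : ∀ i, b (g (Sum.inl i)) = g (Sum.inl i) := by
    intro i
    by_contra hne
    have hle : ∀ m, i ≤ m → g (Sum.inr m) ≤ b (g (Sum.inl i)) := by
      intro m hm
      have hadj := hA (Sum.inl i) (Sum.inr m) (Or.inl ⟨i, m, hm, rfl, rfl⟩)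
      obtain ⟨_, h | h | h⟩ := hadj
      · rw [h]; exact b1 _
      · exact absurd h.1 hne
      · have := b1 (g (Sum.inl i))
        omega
    have hinj : Function.Injective (fun m => g (Sum.inr (i + m))) := by
      intro m m' h
      have := Sum.inr_injective (hg h)
      omega
    refine Set.infinite_range_of_injective hinj ((Set.finite_Iic (b (g (Sum.inl i)))).subset ?_)
    rintro _ ⟨m, rfl⟩
    exact hle _ (by omega)
  have hlt : ∀ i ∈ Finset.range (f x + 1), f (g (Sum.inl i)) ∈ Finset.range (f x) := by
    intro i hi
    have h1 : g (Sum.inl i) ≤ _ :=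
      Finset.le_sup (f := fun i => g (Sum.inl i)) hi
    have h2 := b2 (g (Sum.inl i)) x (by rw [hend]; exact lt_of_le_of_lt h1 hx)
    rw [hend] at h2
    exact Finset.mem_range.2 h2
  have hc := Finset.card_le_card_of_injOn _ hlt
    (fun i _ j _ h => Sum.inl_injective (hg (hf h)))
  simp at hc
end
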